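/- arXiv:2311.09864 — 3 statements merged into one kernel-verified Lean document; each statement's English description precedes it below -/
import Mathlib

section
/- Let A = A_{k_1,…,k_p} and B = A_{l_1,…,l_q} be block upper-triangular subalgebras of M_n(ℂ). Then there exists a bijective unital ℂ-algebra homomorphism φ : A → B if and only if p = q and (k_1,…,k_p) = (l_1,…,l_q). -/
open Matrix

noncomputable section

/-- The block index function: `blockIdx k i` is the index `s` (0-based) of the diagonal
block containing row/column `i`, for block sizes given by the list `k`. -/
def blockIdx (k : List ℕ) (i : ℕ) : ℕ :=
  ((Finset.range k.length).filter (fun s => (k.take (s + 1)).sum ≤ i)).card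

/-- The block upper-triangular algebra `𝒜_{k₁,…,k_r} ⊆ M_n(ℂ)` determined by the
list of block sizes `k`. -/
def blockAlg (n : ℕ) (k : List ℕ) : Set (Matrix (Fin n) (Fin n) ℂ) :=
  { X | ∀ i j : Fin n, blockIdx k (j : ℕ) < blockIdx k (i : ℕ) → X i j = 0 }

/-- A subset of `M_n(ℂ)` is a block upper-triangular subalgebra if it is of the form
`blockAlg n k` for some list `k` of positive integers summing to `n`. -/
def IsBlockUT (n : ℕ) (𝒜 : Set (Matrix (Fin n) (Fin n) ℂ)) : Prop :=
  ∃ k : List ℕ, (∀ m ∈ k, 0 < m) ∧ k.sum = n ∧ 𝒜 = blockAlg n k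

/-- The exchange matrix `J` (ones on the antidiagonal). -/
def exchMat (n : ℕ) : Matrix (Fin n) (Fin n) ℂ :=
  Matrix.of fun i j => if (i : ℕ) + (j : ℕ) + 1 = n then 1 else 0

/-!
An isomorphism `e : A ≃ B` of block upper-triangular algebras turns `Kⁿ` into a faithful `A`-module
through `B`. Every faithful `A`-module contains a copy of the natural module `Kᵐ`, so there is an
injective linear map `T` with `T (X x) = e(X) (T x)`. It carries nonzero `A`-submodules to nonzero
`B`-submodules of the same dimension. The nonzero invariant subspaces of a block upper-triangular
algebra are the steps of its standard flag, whose dimensions are the partial sums of the block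
sizes. Hence every partial sum for `A` is one for `B`, by symmetry the two sets agree, and a
composition of `n` is determined by its partial sums.
-/

section Subalgebras

variable {K R S : Type*} [CommSemiring K] [Semiring R] [Semiring S] [Algebra K R] [Algebra K S]

theorem exists_bijOn_of_algEquiv {A : Subalgebra K R} {B : Subalgebra K S} (e : A ≃ₐ[K] B) :
    ∃ φ : R → S, Set.BijOn φ A B ∧
      (∀ X ∈ (A : Set R), ∀ Y ∈ (A : Set R), φ (X + Y) = φ X + φ Y) ∧
      (∀ (c : K), ∀ X ∈ (A : Set R), φ (c • X) = c • φ X) ∧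
      (∀ X ∈ (A : Set R), ∀ Y ∈ (A : Set R), φ (X * Y) = φ X * φ Y) ∧
      φ 1 = 1 := by
  let φ : R → S := Function.extend Subtype.val (fun X : A ↦ (e X : S)) 0
  have φ_coe (X : A) : φ X = e X := Subtype.val_injective.extend_apply _ _ X
  refine ⟨φ, ⟨?_, ?_, ?_⟩, ?_, ?_, ?_, ?_⟩
  · intro X hX
    rw [φ_coe ⟨X, hX⟩]
    exact (e ⟨X, hX⟩).2
  · intro X hX Y hY hXY
    rw [φ_coe ⟨X, hX⟩, φ_coe ⟨Y, hY⟩] at hXY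
    exact congrArg Subtype.val (e.injective (Subtype.ext hXY))
  · intro Y hY
    exact ⟨e.symm ⟨Y, hY⟩, (e.symm ⟨Y, hY⟩).2, by rw [φ_coe, e.apply_symm_apply]⟩
  · intro X hX Y hY
    rw [φ_coe ⟨X, hX⟩, φ_coe ⟨Y, hY⟩, ← B.coe_add, ← map_add, ← φ_coe, A.coe_add]
  · intro c X hX
    rw [φ_coe ⟨X, hX⟩, ← B.coe_smul, ← map_smul, ← φ_coe, A.coe_smul]
  · intro X hX Y hY
    rw [φ_coe ⟨X, hX⟩, φ_coe ⟨Y, hY⟩, ← B.coe_mul, ← map_mul, ← φ_coe, A.coe_mul]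
  · simpa using φ_coe 1

theorem exists_bijOn_iff_nonempty_algEquiv (A : Subalgebra K R) (B : Subalgebra K S) :
    (∃ φ : R → S, Set.BijOn φ A B ∧
      (∀ X ∈ (A : Set R), ∀ Y ∈ (A : Set R), φ (X + Y) = φ X + φ Y) ∧
      (∀ (c : K), ∀ X ∈ (A : Set R), φ (c • X) = c • φ X) ∧
      (∀ X ∈ (A : Set R), ∀ Y ∈ (A : Set R), φ (X * Y) = φ X * φ Y) ∧
      φ 1 = 1) ↔ Nonempty (A ≃ₐ[K] B) := by
  refine ⟨?_, fun ⟨e⟩ ↦ exists_bijOn_of_algEquiv e⟩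
  rintro ⟨φ, hφ, map_add, map_smul, map_mul, map_one⟩
  let f : A →ₗ[K] B :=
    { toFun := hφ.mapsTo.restrict φ A B
      map_add' X Y := Subtype.ext (map_add X X.2 Y Y.2)
      map_smul' c X := Subtype.ext (map_smul c X X.2) }
  exact ⟨.ofBijective
    (.ofLinearMap f (Subtype.ext map_one) fun X Y ↦ Subtype.ext (map_mul X X.2 Y Y.2))
    hφ.bijective⟩

end Subalgebras

theorem finrank_map_of_injective {K A A' M M' : Type*} [CommSemiring K] [Semiring A] [Semiring A']
    [Algebra K A] [Algebra K A'] [AddCommMonoid M] [AddCommMonoid M'] [Module K M] [Module K M']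
    [Module A M] [Module A' M'] [IsScalarTower K A M] [IsScalarTower K A' M'] (σ : A →+* A')
    [RingHomSurjective σ] (hσ : ∀ c, σ (algebraMap K A c) = algebraMap K A' c)
    (T : M →ₛₗ[σ] M') (hT : Function.Injective T) (S : Submodule A M) :
    Module.finrank K (S.map T) = Module.finrank K S := by
  let T' : M →ₗ[K] M' :=
    { T with
      map_smul' c x := calc
        T (c • x) = T (algebraMap K A c • x) := by rw [algebraMap_smul]
        _ = algebraMap K A' c • T x := by rw [map_smulₛₗ, hσ]
        _ = c • T x := algebraMap_smul A' c (T x) }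
  exact ((S.restrictScalars K).equivMapOfInjective T' hT).finrank_eq.symm

section BlockTriangular

variable {m m' α α' : Type*} [Fintype m] [DecidableEq m] [Fintype m'] [DecidableEq m']
  [LinearOrder α] [LinearOrder α']

/-- The algebra of matrices that are block upper-triangular with respect to the level function `b`:
the row or column `i` lies in the block `b i`. -/
def blockTriangularSubalgebra (K : Type*) [CommSemiring K] (b : m → α) :
    Subalgebra K (Matrix m m K) where
  carrier := {X | X.BlockTriangular b}
  mul_mem' := BlockTriangular.mul
  add_mem' := BlockTriangular.add
  algebraMap_mem' c := by
    rw [Set.mem_ofPred_eq, algebraMap_eq_diagonal]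
    exact blockTriangular_diagonal _

instance (K : Type*) [CommSemiring K] (b : m → α) :
    FaithfulSMul (blockTriangularSubalgebra K b) (m → K) where
  eq_of_smul_eq_smul h := Subtype.ext (ext_iff_smul.2 h)

/-- The step of the standard flag consisting of the vectors supported on the blocks up to `a`,
as a submodule for the block upper-triangular matrices. -/
def flagSubmodule (K : Type*) [CommSemiring K] (b : m → α) (a : α) :
    Submodule (blockTriangularSubalgebra K b) (m → K) where
  carrier := {x | ∀ i, a < b i → x i = 0}
  add_mem' hx hy i hi := by simp [hx i hi, hy i hi]
  zero_mem' _ _ := rfl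
  smul_mem' X x hx i hi := by
    refine Finset.sum_eq_zero fun p _ ↦ ?_
    rcases lt_or_ge a (b p) with hp | hp
    · simp [hx p hp]
    · simp [X.2 (hp.trans_lt hi)]

@[simp]
theorem mem_flagSubmodule {K : Type*} [CommSemiring K] {b : m → α} {a : α} {x : m → K} :
    x ∈ flagSubmodule K b a ↔ ∀ i, a < b i → x i = 0 :=
  Iff.rfl

theorem finrank_flagSubmodule (K : Type*) [CommRing K] [Nontrivial K] (b : m → α) (a : α) :
    Module.finrank K (flagSubmodule K b a) = {i | b i ≤ a}.ncard := by
  have : (flagSubmodule K b a).restrictScalars K = Pi.spanSubset K {i | b i ≤ a} := by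
    ext x
    simp [Pi.mem_spanSubset_iff]
  rw [← Pi.dim_spanSubset (R := K), ← this]
  rfl

theorem vecMulVec_single_mem_blockTriangularSubalgebra {K : Type*} [CommSemiring K] {b : m → α}
    {j : m} {x : m → K} (hx : x ∈ flagSubmodule K b (b j)) (c : K) :
    vecMulVec x (Pi.single j c) ∈ blockTriangularSubalgebra K b := by
  intro i p hpi
  obtain rfl | hp := eq_or_ne p j
  · simp [vecMulVec_apply, hx i hpi]
  · simp [vecMulVec_apply, hp]

variable {K : Type*} [Field K]

theorem exists_eq_flagSubmodule {b : m → α} {S : Submodule (blockTriangularSubalgebra K b) (m → K)}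
    (hS : S ≠ ⊥) : ∃ j, S = flagSubmodule K b (b j) := by
  obtain ⟨j, ⟨v, hvS, hvj⟩, j_max⟩ : ∃ j, (∃ v ∈ S, v j ≠ 0) ∧
      ∀ i, (∃ v ∈ S, v i ≠ 0) → b i ≤ b j := by
    obtain ⟨v, hvS, hv⟩ := S.ne_bot_iff.1 hS
    obtain ⟨i, hi⟩ := Function.ne_iff.1 hv
    exact Set.exists_max_image {i | ∃ v ∈ S, v i ≠ 0} b (Set.toFinite _) ⟨i, v, hvS, hi⟩
  refine ⟨j, le_antisymm (fun x hx i hi ↦ ?_) fun x hx ↦ ?_⟩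
  · by_contra hxi
    exact hi.not_ge (j_max i ⟨x, hx, hxi⟩)
  · let X : blockTriangularSubalgebra K b :=
      ⟨_, vecMulVec_single_mem_blockTriangularSubalgebra hx (v j)⁻¹⟩
    have hX : X • v = x := by
      simp [X, Subalgebra.smul_def, vecMulVec_mulVec, hvj]
    exact hX ▸ S.smul_mem X hvS

theorem exists_smul_eq_single_of_ne_zero {b : m → α} {z : m} (z_min : ∀ i, b z ≤ b i)
    {x : m → K} (hx : x ≠ 0) : ∃ X : blockTriangularSubalgebra K b, X • x = Pi.single z 1 := by
  obtain ⟨i, hi⟩ : ∃ i, x i ≠ 0 := Function.ne_iff.1 hx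
  refine ⟨⟨single z i (x i)⁻¹, blockTriangular_single (z_min i) _⟩, ?_⟩
  ext p
  simp [Subalgebra.smul_def, single_mulVec_eq, inv_mul_cancel₀ hi]

/-- For `j` in the last block, the matrices `x eⱼᵀ` form a left ideal isomorphic to `Kᵐ`; it embeds
into `W` by acting on a vector that is not killed by `e_z eⱼᵀ`, where `z` is in the first block. -/
theorem exists_injective_semilinearMap_of_faithfulSMul {b : m → α} {R W : Type*}
    [Semiring R] [AddCommGroup W] [Module R W] [FaithfulSMul R W]
    (σ : blockTriangularSubalgebra K b →+* R) (hσ : Function.Injective σ) :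
    ∃ T : (m → K) →ₛₗ[σ] W, Function.Injective T := by
  cases isEmpty_or_nonempty m
  · exact ⟨0, Function.injective_of_subsingleton _⟩
  obtain ⟨z, z_min⟩ := Finite.exists_min b
  obtain ⟨j, j_max⟩ := Finite.exists_max b
  let E (x : m → K) : blockTriangularSubalgebra K b :=
    ⟨_, vecMulVec_single_mem_blockTriangularSubalgebra (j := j) (x := x)
      (fun i hi ↦ absurd hi (j_max i).not_gt) 1⟩
  have E_add (x y : m → K) : E (x + y) = E x + E y := Subtype.ext (add_vecMulVec _ _ _)
  have E_smul (X : blockTriangularSubalgebra K b) (x : m → K) : E (X • x) = X * E x :=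
    Subtype.ext (mul_vecMulVec _ _ _).symm
  have E_z_ne_zero : σ (E (Pi.single z 1)) ≠ 0 := by
    rw [map_ne_zero_iff σ hσ]
    intro h
    simpa [E, vecMulVec_apply] using congrFun₂ (congrArg Subtype.val h) z j
  obtain ⟨w, hw⟩ : ∃ w : W, σ (E (Pi.single z 1)) • w ≠ 0 := by
    by_contra! h
    exact E_z_ne_zero (FaithfulSMul.eq_of_smul_eq_smul fun w : W ↦ by rw [h, zero_smul])
  let T : (m → K) →ₛₗ[σ] W :=
    { toFun x := σ (E x) • w
      map_add' x y := by rw [E_add, map_add, add_smul]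
      map_smul' X x := by rw [E_smul, map_mul, mul_smul] }
  refine ⟨T, (injective_iff_map_eq_zero T).2 fun x hx ↦ ?_⟩
  by_contra hx_ne
  obtain ⟨X, hX⟩ := exists_smul_eq_single_of_ne_zero z_min hx_ne
  apply hw
  calc T (Pi.single z 1) = σ X • T x := by rw [← hX, map_smulₛₗ]
    _ = 0 := by rw [hx, smul_zero]

theorem exists_ncard_eq_of_algEquiv {b : m → α} {b' : m' → α'}
    (e : blockTriangularSubalgebra K b ≃ₐ[K] blockTriangularSubalgebra K b') (j : m) :
    ∃ j', {i | b i ≤ b j}.ncard = {i | b' i ≤ b' j'}.ncard := by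
  let σ : blockTriangularSubalgebra K b →+* blockTriangularSubalgebra K b' := e
  have : RingHomSurjective σ := ⟨e.surjective⟩
  obtain ⟨T, hT⟩ := exists_injective_semilinearMap_of_faithfulSMul (W := m' → K) σ e.injective
  have map_flag_ne_bot : (flagSubmodule K b (b j)).map T ≠ ⊥ := by
    have single_mem : Pi.single j 1 ∈ flagSubmodule K b (b j) :=
      fun i hi ↦ Pi.single_eq_of_ne (ne_of_apply_ne b hi.ne') _
    exact Submodule.ne_bot_iff _ |>.2
      ⟨_, Submodule.mem_map_of_mem single_mem, (map_ne_zero_iff T hT).2 (by simp)⟩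
  obtain ⟨j', hj'⟩ := exists_eq_flagSubmodule map_flag_ne_bot
  refine ⟨j', ?_⟩
  rw [← finrank_flagSubmodule K, ← finrank_flagSubmodule K, ← hj']
  exact (finrank_map_of_injective σ e.commutes T hT _).symm

end BlockTriangular

section Compositions

variable {n : ℕ}

theorem sizeUpTo_succ_le_iff_lt_index (c : Composition n) (s : ℕ) (i : Fin n) :
    c.sizeUpTo (s + 1) ≤ i ↔ s < c.index i := by
  refine ⟨fun h ↦ ?_, fun h ↦ (c.monotone_sizeUpTo h).trans (c.sizeUpTo_index_le i)⟩
  by_contra! hs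
  exact (h.trans_lt (c.lt_sizeUpTo_index_succ i)).not_ge
    (c.monotone_sizeUpTo (Nat.succ_le_succ hs))

theorem ncard_index_le (c : Composition n) (s : Fin c.length) :
    {i | c.index i ≤ s}.ncard = c.sizeUpTo (s + 1) := by
  have : {i | c.index i ≤ s} = ({i : Fin n | (i : ℕ) < c.sizeUpTo (s + 1)} : Finset (Fin n)) := by
    ext i
    simpa using (sizeUpTo_succ_le_iff_lt_index c s i).not.symm
  rw [this, Set.ncard_coe_finset, Fin.card_filter_val_lt, min_eq_right (c.sizeUpTo_le _)]

theorem boundaries_subset_of_forall_exists_sizeUpTo_eq {c d : Composition n}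
    (h : ∀ s : Fin c.length, ∃ t : Fin d.length, c.sizeUpTo (s + 1) = d.sizeUpTo (t + 1)) :
    c.boundaries ⊆ d.boundaries := by
  intro x hx
  obtain ⟨s, -, rfl⟩ := Finset.mem_map.1 hx
  refine Finset.mem_map.2 ?_
  cases s using Fin.cases with
  | zero => exact ⟨0, Finset.mem_univ _, by simp⟩
  | succ s =>
    obtain ⟨t, ht⟩ := h s
    exact ⟨t.succ, Finset.mem_univ _, Fin.ext ht.symm⟩

theorem composition_boundaries_injective : Function.Injective (Composition.boundaries (n := n)) :=
  fun _ _ h ↦ (compositionEquiv n).injective (CompositionAsSet.ext h)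

theorem composition_index_surjective (c : Composition n) : Function.Surjective c.index :=
  fun s ↦ ⟨c.embedding s ⟨0, c.one_le_blocksFun s⟩, c.index_embedding s _⟩

theorem boundaries_subset_of_algEquiv {K : Type*} [Field K] {c d : Composition n}
    (e : blockTriangularSubalgebra K c.index ≃ₐ[K] blockTriangularSubalgebra K d.index) :
    c.boundaries ⊆ d.boundaries := by
  refine boundaries_subset_of_forall_exists_sizeUpTo_eq fun s ↦ ?_
  obtain ⟨j, rfl⟩ := composition_index_surjective c s
  obtain ⟨j', hj'⟩ := exists_ncard_eq_of_algEquiv e j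
  exact ⟨d.index j', by rwa [ncard_index_le, ncard_index_le] at hj'⟩

theorem blockIdx_blocks (c : Composition n) (i : Fin n) : blockIdx c.blocks i = c.index i := by
  have : {s ∈ Finset.range c.length | c.sizeUpTo (s + 1) ≤ i} = Finset.range (c.index i) := by
    ext s
    simp only [Finset.mem_filter, Finset.mem_range, sizeUpTo_succ_le_iff_lt_index]
    exact and_iff_right_of_imp (·.trans (c.index i).2)
  exact (congrArg Finset.card this).trans (Finset.card_range _)

theorem blockAlg_eq_blockTriangularSubalgebra {k : List ℕ} (hk : ∀ m ∈ k, 0 < m)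
    (hks : k.sum = n) :
    blockAlg n k = blockTriangularSubalgebra ℂ (Composition.mk k (hk _) hks).index := by
  ext X
  simp only [blockAlg, blockIdx_blocks ⟨k, hk _, hks⟩]
  rfl

theorem blockAlg_iso_iff_general {K : Type*} [Field K] (c d : Composition n) :
    Nonempty (blockTriangularSubalgebra K c.index ≃ₐ[K] blockTriangularSubalgebra K d.index) ↔
      c = d := by
  refine ⟨fun ⟨e⟩ ↦ composition_boundaries_injective ?_, fun h ↦ h ▸ ⟨AlgEquiv.refl⟩⟩
  exact (boundaries_subset_of_algEquiv e).antisymm (boundaries_subset_of_algEquiv e.symm)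

end Compositions

theorem blockAlg_iso_iff {n : ℕ} (k l : List ℕ)
    (hk : ∀ m ∈ k, 0 < m) (hl : ∀ m ∈ l, 0 < m)
    (hks : k.sum = n) (hls : l.sum = n) :
    (∃ φ : Matrix (Fin n) (Fin n) ℂ → Matrix (Fin n) (Fin n) ℂ,
      Set.BijOn φ (blockAlg n k) (blockAlg n l) ∧
      (∀ X ∈ blockAlg n k, ∀ Y ∈ blockAlg n k, φ (X + Y) = φ X + φ Y) ∧
      (∀ (c : ℂ), ∀ X ∈ blockAlg n k, φ (c • X) = c • φ X) ∧
      (∀ X ∈ blockAlg n k, ∀ Y ∈ blockAlg n k, φ (X * Y) = φ X * φ Y) ∧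
      φ 1 = 1) ↔ k = l := by
  rw [blockAlg_eq_blockTriangularSubalgebra hk hks, blockAlg_eq_blockTriangularSubalgebra hl hls,
    exists_bijOn_iff_nonempty_algEquiv, blockAlg_iso_iff_general, Composition.mk.injEq]
end
end

section
/- Let A = A_{k_1,…,k_p} and B = A_{l_1,…,l_q} be block upper-triangular subalgebras of M_n(ℂ). Then there exists a bijective linear map φ : A → B satisfying φ(X²) = φ(X)² for all X ∈ A (a Jordan isomorphism) if and only if p = q and either (k_1,…,k_p) = (l_1,…,l_q) or (k_1,…,k_p) = (l_q,…,l_1). -/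
open Matrix

noncomputable section

/-!
Over a field of characteristic other than two, a Jordan isomorphism preserves `xyx`, hence sends
the diagonal matrix units `Eᵢᵢ` to orthogonal idempotents. These are diagonalized simultaneously
by conjugation with an invertible matrix of the target algebra, so one may assume that `Eᵢᵢ` goes
to `E_{σ(i)σ(i)}` for a permutation `σ`. The Jordan structure sees the blocks of indices up to
reversal of their order: `Eᵢᵢ (X Eⱼⱼ X) Eₖₖ + Eₖₖ (X Eⱼⱼ X) Eᵢᵢ` is nonzero for some `X` exactly
when the block of `j` lies between the blocks of `i` and `k`. Therefore `σ` preserves betweenness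
of blocks, so it preserves or reverses their order. Conversely, reflection in the antidiagonal is a
Jordan isomorphism which reverses the order of the blocks.
-/

theorem isSMulRegular_two (R M : Type*) [Ring R] [IsDomain R] [NeZero (2 : R)] [AddCommGroup M]
    [Module R M] [Module.IsTorsionFree R M] : IsSMulRegular M 2 := fun _ _ h =>
  IsSMulRegular.of_ne_zero (two_ne_zero' R) (by simpa [ofNat_smul_eq_nsmul] using h)

section JordanHom

variable {R S F : Type*} [FunLike F R S]

/-- A map between rings, in practice an additive one, is a *Jordan homomorphism* if it preserves
squares. -/
def IsJordanHom [Mul R] [Mul S] (φ : R → S) : Prop :=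
  ∀ x, φ (x * x) = φ x * φ x

theorem IsJordanHom.map_mul_add_mul_swap [NonUnitalNonAssocRing R] [NonUnitalNonAssocRing S]
    [AddMonoidHomClass F R S] {φ : F} (hφ : IsJordanHom φ) (x y : R) :
    φ (x * y + y * x) = φ x * φ y + φ y * φ x := by
  have h := hφ (x + y)
  simp only [mul_add, add_mul, map_add, hφ x, hφ y] at h ⊢
  rw [← sub_eq_zero] at h ⊢
  rw [← h]
  abel

variable [NonUnitalRing R] [NonUnitalRing S] [AddMonoidHomClass F R S] {φ : F}

theorem IsJordanHom.map_mul_mul_self (hS : IsSMulRegular S 2) (hφ : IsJordanHom φ) (x y : R) :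
    φ (x * y * x) = φ x * φ y * φ x := by
  have hxyx : 2 • (x * y * x) =
      (x * (x * y + y * x) + (x * y + y * x) * x) - (x * x * y + y * (x * x)) := by
    noncomm_ring
  apply hS
  calc 2 • φ (x * y * x) = φ (2 • (x * y * x)) := (map_nsmul φ 2 _).symm
    _ = φ x * (φ x * φ y + φ y * φ x) + (φ x * φ y + φ y * φ x) * φ x -
        (φ x * φ x * φ y + φ y * (φ x * φ x)) := by
      simp only [hxyx, map_sub, hφ.map_mul_add_mul_swap, hφ x]
    _ = 2 • (φ x * φ y * φ x) := by noncomm_ring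

theorem IsJordanHom.map_mul_mul_add_swap (hS : IsSMulRegular S 2) (hφ : IsJordanHom φ)
    (x y z : R) :
    φ (x * y * z + z * y * x) = φ x * φ y * φ z + φ z * φ y * φ x := by
  have h := hφ.map_mul_mul_self hS (x + z) y
  simp only [mul_add, add_mul, map_add, hφ.map_mul_mul_self hS x, hφ.map_mul_mul_self hS z] at h ⊢
  rw [← sub_eq_zero] at h ⊢
  rw [← h]
  abel

theorem IsJordanHom.orthogonalIdempotents {R S F : Type*} [Ring R] [Ring S] [FunLike F R S]
    [AddMonoidHomClass F R S] {φ : F} (hS : IsSMulRegular S 2) (hφ : IsJordanHom φ)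
    {I : Type*} {e : I → R} (he : OrthogonalIdempotents e) :
    OrthogonalIdempotents (φ ∘ e) where
  idem i := by simp only [IsIdempotentElem, Function.comp_apply, ← hφ (e i), (he.idem i).eq]
  ortho i j hij := by
    have hsum : φ (e i) * φ (e j) + φ (e j) * φ (e i) = 0 := by
      rw [← hφ.map_mul_add_mul_swap, he.ortho hij, he.ortho hij.symm, add_zero, map_zero]
    have htriple : φ (e i) * φ (e j) * φ (e i) = 0 := by
      rw [← hφ.map_mul_mul_self hS, he.ortho hij, zero_mul, map_zero]
    calc φ (e i) * φ (e j) = φ (e i * e i) * φ (e j) := by rw [(he.idem i).eq]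
      _ = φ (e i) * (φ (e i) * φ (e j) + φ (e j) * φ (e i)) - φ (e i) * φ (e j) * φ (e i) := by
        rw [hφ]; noncomm_ring
      _ = 0 := by rw [hsum, htriple, mul_zero, sub_zero]

end JordanHom

section MatrixUnits

variable {ι K α : Type*} [Fintype ι] [DecidableEq ι] [CommRing K] [LinearOrder α] {b : ι → α}

variable (K b) in
/-- The matrix unit `Eᵢᵢ` as an element of the block triangular algebra with block map `b`. -/
def diagSingle (i : ι) : blockTriangularSubalgebra K K b :=
  ⟨single i i 1, blockTriangular_single le_rfl 1⟩

theorem orthogonalIdempotents_diagSingle : OrthogonalIdempotents (diagSingle K b) where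
  idem i := Subtype.ext <| by simp [diagSingle]
  ortho i j hij := Subtype.ext <| by simp [diagSingle, hij]

theorem diagSingle_ne_zero [Nontrivial K] (i : ι) : diagSingle K b i ≠ 0 := by
  intro h
  simpa [diagSingle] using congr(($h).val i i)

end MatrixUnits

section Diagonalization

variable {ι : Type*} [Fintype ι] [DecidableEq ι]

theorem mul_single_one_mul_apply {R : Type*} [Semiring R] (M N : Matrix ι ι R) (i r s : ι) :
    (M * single i i (1 : R) * N) r s = M r i * N i s := by
  rw [mul_apply, Finset.sum_eq_single i]
  · simp
  · intro j _ hj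
    simp [hj]
  · simp

theorem exists_perm_forall_ne_zero_of_det_ne_zero {R : Type*} [CommRing R] {M : Matrix ι ι R}
    (hM : M.det ≠ 0) : ∃ σ : Equiv.Perm ι, ∀ i, M i (σ i) ≠ 0 := by
  rw [← Matrix.det_transpose, Matrix.det_apply] at hM
  obtain ⟨σ, -, hσ⟩ := Finset.exists_ne_zero_of_sum_ne_zero hM
  exact ⟨σ, fun i hi => hσ (by rw [Finset.prod_eq_zero (Finset.mem_univ i) hi, smul_zero])⟩

variable {K : Type*} [Field K] {P : ι → Matrix ι ι K}

theorem exists_eq_conj_single (hP : OrthogonalIdempotents P) (hP0 : ∀ i, P i ≠ 0) :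
    ∃ S : (Matrix ι ι K)ˣ, ∀ i, P i = S.val * single i i 1 * S⁻¹.val := by
  have hw i : ∃ w, P i *ᵥ w ≠ 0 := by
    by_contra! h
    exact hP0 i (Matrix.ext_of_mulVec_single fun j => by rw [h, zero_mulVec])
  choose w hw using hw
  let v i := P i *ᵥ w i
  have hPv i j : P i *ᵥ v j = if i = j then v j else 0 := by
    rw [mulVec_mulVec, hP.mul_eq]
    split_ifs with hij
    · rw [hij]
    · rw [zero_mulVec]
  have hv : LinearIndependent K v := by
    rw [Fintype.linearIndependent_iff]
    intro c hc i
    have h := congr(P i *ᵥ $hc)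
    simp only [mulVec_sum, mulVec_smul, hPv] at h
    simpa [v, hw] using h
  have hPS i : P i * (Matrix.of v)ᵀ = (Matrix.of v)ᵀ * single i i 1 := by
    ext r j
    have h : (P i * (Matrix.of v)ᵀ) r j = (P i *ᵥ v j) r := rfl
    rw [h, hPv]
    split_ifs with hij
    · simp [hij]
    · simp [Ne.symm hij]
  obtain ⟨S, hS⟩ : IsUnit (Matrix.of v)ᵀ := Matrix.linearIndependent_cols_iff_isUnit.1 hv
  exact ⟨S, fun i => by rw [Units.eq_mul_inv_iff_mul_eq, hS, hPS]⟩

variable {α : Type*} [LinearOrder α] {b : ι → α}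

theorem exists_blockTriangular_eq_conj_single (hP : OrthogonalIdempotents P) (hP0 : ∀ i, P i ≠ 0)
    (hPb : ∀ i, (P i).BlockTriangular b) :
    ∃ (S : (Matrix ι ι K)ˣ) (σ : Equiv.Perm ι), S.val.BlockTriangular b ∧
      ∀ i, P i = S.val * single (σ i) (σ i) 1 * S⁻¹.val := by
  obtain ⟨S, hS⟩ := exists_eq_conj_single hP hP0
  have hdet : S⁻¹.val.det ≠ 0 := ((Matrix.isUnit_iff_isUnit_det _).1 S⁻¹.isUnit).ne_zero
  obtain ⟨σ, hσ⟩ := exists_perm_forall_ne_zero_of_det_ne_zero hdet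
  have hentry i r s : P i r s = S.val r i * S⁻¹.val i s := by
    rw [hS, mul_single_one_mul_apply]
  have hle i r (hr : S.val r i ≠ 0) : b r ≤ b (σ i) := by
    by_contra! hlt
    exact mul_ne_zero hr (hσ i) (hentry i r (σ i) ▸ hPb i hlt)
  -- Moving column `i` of `S` to position `σ i` makes `S` block triangular.
  let Q : (Matrix ι ι K)ˣ :=
    ⟨S.val.submatrix id σ.symm, S⁻¹.val.submatrix σ.symm id, by
      rw [submatrix_mul_equiv, S.mul_inv, submatrix_id_id], by
      rw [← submatrix_mul _ _ _ _ _ Function.bijective_id, S.inv_mul, submatrix_one_equiv]⟩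
  refine ⟨Q, σ, fun r s hrs => ?_, fun i => ?_⟩
  · by_contra hne
    exact hrs.not_ge (by simpa using hle _ _ hne)
  · ext r s
    rw [hentry, mul_single_one_mul_apply]
    simp [Q]

theorem exists_ringEquiv_apply_eq_diagSingle {P : ι → blockTriangularSubalgebra K K b}
    (hP : OrthogonalIdempotents P) (hP0 : ∀ i, P i ≠ 0) :
    ∃ (γ : blockTriangularSubalgebra K K b ≃+* blockTriangularSubalgebra K K b)
      (σ : Equiv.Perm ι), ∀ i, γ (P i) = diagSingle K b (σ i) := by
  obtain ⟨S, σ, hSb, hS⟩ := exists_blockTriangular_eq_conj_single (b := b)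
    (P := fun i => (P i).val) (hP.map (blockTriangularSubalgebra K K b).val.toRingHom)
    (fun i => by simpa using hP0 i) (fun i => (P i).2)
  have hSb' : S⁻¹.val.BlockTriangular b := by
    have := S.invertible
    rw [Matrix.coe_units_inv]
    exact blockTriangular_inv_of_blockTriangular hSb
  let u : (blockTriangularSubalgebra K K b)ˣ :=
    ⟨⟨S, hSb⟩, ⟨S⁻¹.val, hSb'⟩, Subtype.ext S.mul_inv, Subtype.ext S.inv_mul⟩
  refine ⟨MulSemiringAction.toRingEquiv _ _ (ConjAct.toConjAct u⁻¹), σ, fun i => Subtype.ext ?_⟩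
  have h : S⁻¹.val * (P i).val * S.val = single (σ i) (σ i) 1 := by
    rw [hS i]
    simp [mul_assoc]
  simpa [ConjAct.units_smul_def, diagSingle, u] using h

end Diagonalization

section Betweenness

variable {ι K α β : Type*} [Fintype ι] [DecidableEq ι] [LinearOrder α] [LinearOrder β]

/-- The sum of the two Peirce components, at `(i, k)` and at `(k, i)`, of `X Eⱼⱼ X`, which
counts this component twice if `i = k`. It is written with Jordan triple products only, hence is
preserved by Jordan homomorphisms. -/
def peirceSum [CommRing K] (b : ι → α) (i j k : ι) (X : blockTriangularSubalgebra K K b) :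
    blockTriangularSubalgebra K K b :=
  diagSingle K b i * (X * diagSingle K b j * X) * diagSingle K b k +
    diagSingle K b k * (X * diagSingle K b j * X) * diagSingle K b i

variable [CommRing K]

theorem coe_peirceSum (b : ι → α) (i j k : ι) (X : blockTriangularSubalgebra K K b) :
    (peirceSum b i j k X).val =
      single i k (X.val i j * X.val j k) + single k i (X.val k j * X.val j i) := by
  simp [peirceSum, diagSingle, mul_single_one_mul_apply (R := K)]

theorem exists_peirceSum_ne_zero_iff [NeZero (2 : K)] {b : ι → α} (i j k : ι) :
    (∃ X : blockTriangularSubalgebra K K b, peirceSum b i j k X ≠ 0) ↔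
      b j ∈ Set.uIcc (b i) (b k) := by
  rw [Set.mem_uIcc]
  constructor
  · rintro ⟨X, hX⟩
    have entry_ne_zero {r s} (h : X.val r s ≠ 0) : b r ≤ b s := not_lt.1 fun hlt => h (X.2 hlt)
    have mul_eq_zero_of {r s t} (h : ¬(b r ≤ b s ∧ b s ≤ b t)) : X.val r s * X.val s t = 0 := by
      contrapose! h
      exact ⟨entry_ne_zero (left_ne_zero_of_mul h), entry_ne_zero (right_ne_zero_of_mul h)⟩
    by_contra h
    rw [not_or] at h
    refine hX (Subtype.ext ?_)
    rw [coe_peirceSum, mul_eq_zero_of h.1, mul_eq_zero_of h.2, single_zero, single_zero, add_zero]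
    rfl
  · intro h
    let X : blockTriangularSubalgebra K K b :=
      ⟨of fun r s => if b r ≤ b s then 1 else 0, fun r s hrs => if_neg hrs.not_ge⟩
    refine ⟨X, fun hX => ?_⟩
    have : Nontrivial K := ⟨2, 0, two_ne_zero⟩
    have hik := congr(($hX).val i k)
    have hki := congr(($hX).val k i)
    rw [coe_peirceSum] at hik hki
    by_cases heq : i = k
    · subst heq
      rw [or_comm, and_comm, or_self] at h
      simp [X, h, one_add_one_eq_two, two_ne_zero] at hik
    · rcases h with h | h
      · simp [X, h, heq] at hik
      · simp [X, h, heq] at hki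

theorem IsJordanHom.map_peirceSum {κ F : Type*} [Fintype κ] [DecidableEq κ] {a : ι → α} {b : κ → β}
    [FunLike F (blockTriangularSubalgebra K K a) (blockTriangularSubalgebra K K b)]
    [AddMonoidHomClass F (blockTriangularSubalgebra K K a) (blockTriangularSubalgebra K K b)]
    {φ : F} (hK : IsSMulRegular (blockTriangularSubalgebra K K b) 2) (hφ : IsJordanHom φ)
    {σ : ι → κ} (hφσ : ∀ i, φ (diagSingle K a i) = diagSingle K b (σ i)) (i j k : ι)
    (X : blockTriangularSubalgebra K K a) :
    φ (peirceSum a i j k X) = peirceSum b (σ i) (σ j) (σ k) (φ X) := by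
  rw [peirceSum, hφ.map_mul_mul_add_swap hK, hφ.map_mul_mul_self hK, hφσ, hφσ, hφσ, peirceSum]

theorem IsJordanHom.exists_perm_mem_uIcc_iff {K : Type*} [Field K] [NeZero (2 : K)] {a : ι → α}
    {b : ι → β} {φ : blockTriangularSubalgebra K K a ≃+ blockTriangularSubalgebra K K b}
    (hφ : IsJordanHom φ) :
    ∃ σ : Equiv.Perm ι, ∀ i j k,
      a j ∈ Set.uIcc (a i) (a k) ↔ b (σ j) ∈ Set.uIcc (b (σ i)) (b (σ k)) := by
  have h2 : IsSMulRegular (blockTriangularSubalgebra K K b) 2 := isSMulRegular_two K _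
  obtain ⟨γ, σ, hγ⟩ := exists_ringEquiv_apply_eq_diagSingle
    (hφ.orthogonalIdempotents h2 orthogonalIdempotents_diagSingle)
    (fun i => (map_ne_zero_iff φ φ.injective).2 (diagSingle_ne_zero i))
  let ψ := φ.trans γ.toAddEquiv
  have hψ : IsJordanHom ψ := fun X => by simp [ψ, hφ X]
  refine ⟨σ, fun i j k => ?_⟩
  rw [← exists_peirceSum_ne_zero_iff (K := K), ← exists_peirceSum_ne_zero_iff (K := K),
    ψ.surjective.exists]
  refine exists_congr fun X => ?_
  rw [← hψ.map_peirceSum h2 hγ, map_ne_zero_iff ψ ψ.injective]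

end Betweenness

section BlockIdx

theorem blockIdx_cons (m : ℕ) (k : List ℕ) (i : ℕ) :
    blockIdx (m :: k) i = if i < m then 0 else blockIdx k (i - m) + 1 := by
  rw [blockIdx, blockIdx]
  split_ifs with h
  · rw [Finset.card_eq_zero, Finset.filter_eq_empty_iff]
    intro s _
    rw [List.take_succ_cons, List.sum_cons]
    omega
  · rw [Finset.card_filter, Finset.card_filter, List.length_cons, Finset.sum_range_succ']
    simp [← Nat.le_sub_iff_add_le' (not_lt.1 h), not_lt.1 h]

theorem monotone_blockIdx (k : List ℕ) : Monotone (blockIdx k) := fun _ _ hij =>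
  Finset.card_le_card <| Finset.monotone_filter_right _ fun _ _ h => h.trans hij

theorem blockIdx_append (k l : List ℕ) (i : ℕ) :
    blockIdx (k ++ l) i =
      if i < k.sum then blockIdx k i else k.length + blockIdx l (i - k.sum) := by
  induction k generalizing i with
  | nil => simp
  | cons m k ih =>
    simp only [List.cons_append, blockIdx_cons, ih, List.sum_cons, List.length_cons, Nat.sub_sub]
    split_ifs <;> omega

theorem blockIdx_reverse_add_blockIdx {l : List ℕ} {i j : ℕ} (h : i + j + 1 = l.sum) :
    blockIdx l.reverse i + blockIdx l j + 1 = l.length := by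
  induction l generalizing i j with
  | nil => simp at h
  | cons m l ih =>
    simp only [List.reverse_cons, blockIdx_append, blockIdx_cons, List.sum_reverse,
      List.length_reverse, List.length_cons, List.sum_cons] at h ⊢
    split_ifs with hi hj hj
    · omega
    · have := ih (i := i) (j := j - m) (by omega)
      omega
    all_goals omega

theorem eq_of_blockIdx_eq_iff {k l : List ℕ} (hk : ∀ m ∈ k, 0 < m) (hl : ∀ m ∈ l, 0 < m)
    (hs : k.sum = l.sum)
    (h : ∀ i < k.sum, ∀ j < k.sum, blockIdx k i = blockIdx k j ↔ blockIdx l i = blockIdx l j) :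
    k = l := by
  induction k generalizing l with
  | nil =>
    cases l with
    | nil => rfl
    | cons y l =>
      have := hl y List.mem_cons_self
      rw [List.sum_nil, List.sum_cons] at hs
      omega
  | cons x k ih =>
    cases l with
    | nil =>
      have := hk x List.mem_cons_self
      rw [List.sum_nil, List.sum_cons] at hs
      omega
    | cons y l =>
      rw [List.forall_mem_cons] at hk hl
      simp only [List.sum_cons, blockIdx_cons] at hs h
      have hxy : x = y := by
        by_contra hne
        have := h 0 (by omega) (min x y) (by omega)
        grind
      subst hxy
      congr 1
      refine ih hk.2 hl.2 (by omega) fun i hi j hj => ?_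
      simpa using h (x + i) (by omega) (x + j) (by omega)

theorem comp_perm_eq_self_of_monotone {α : Type*} [PartialOrder α] {n : ℕ} {f : Fin n → α}
    (hf : Monotone f) {σ : Equiv.Perm (Fin n)} (hσ : Monotone (f ∘ σ)) : f ∘ σ = f :=
  Tuple.unique_monotone (τ := Equiv.refl _) hσ hf

theorem comp_perm_eq_comp_rev_of_antitone {α : Type*} [PartialOrder α] {n : ℕ} {f : Fin n → α}
    (hf : Monotone f) {σ : Equiv.Perm (Fin n)} (hσ : Antitone (f ∘ σ)) : f ∘ σ = f ∘ Fin.rev := by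
  have h : f ∘ Fin.revPerm.trans σ = f :=
    comp_perm_eq_self_of_monotone hf (hσ.comp Fin.rev_strictAnti.antitone)
  funext i
  simpa using congrFun h i.rev

theorem eq_or_eq_reverse_of_mem_uIcc_iff {n : ℕ} {k l : List ℕ} (hk : ∀ m ∈ k, 0 < m)
    (hl : ∀ m ∈ l, 0 < m) (hks : k.sum = n) (hls : l.sum = n) {σ : Equiv.Perm (Fin n)}
    (hσ : ∀ i j m : Fin n, blockIdx k j ∈ Set.uIcc (blockIdx k i) (blockIdx k m) ↔
      blockIdx l (σ j) ∈ Set.uIcc (blockIdx l (σ i)) (blockIdx l (σ m))) :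
    k = l ∨ k = l.reverse := by
  let f (i : Fin n) : ℕ := blockIdx l i
  have monotone_fin (l : List ℕ) : Monotone fun i : Fin n => blockIdx l i :=
    (monotone_blockIdx l).comp Fin.val_strictMono.monotone
  have hker (i j : Fin n) : blockIdx k i = blockIdx k j ↔ f (σ i) = f (σ j) := by
    simpa using hσ j i j
  have eq_of_ker {l' : List ℕ} (hl' : ∀ m ∈ l', 0 < m) (hls' : l'.sum = n)
      (h : ∀ i j : Fin n, f (σ i) = f (σ j) ↔ blockIdx l' i = blockIdx l' j) : k = l' :=
    eq_of_blockIdx_eq_iff hk hl' (hks.trans hls'.symm) fun i hi j hj =>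
      (hker ⟨i, hks ▸ hi⟩ ⟨j, hks ▸ hj⟩).trans (h _ _)
  have hmono : Monotone (f ∘ σ) ∨ Antitone (f ∘ σ) :=
    Set.monotone_or_antitone_iff_uIcc.2 fun i m j hj =>
      (hσ i j m).1 ((monotone_fin k).mapsTo_uIcc hj)
  rcases hmono with h | h
  · have hfσ := congrFun (comp_perm_eq_self_of_monotone (monotone_fin l) h)
    exact .inl <| eq_of_ker hl hls fun i j => by rw [← hfσ i, ← hfσ j]; rfl
  · have hfσ (i : Fin n) : blockIdx l.reverse i + f (σ i) + 1 = l.length := by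
      rw [show f (σ i) = f i.rev from
        congrFun (comp_perm_eq_comp_rev_of_antitone (monotone_fin l) h) i]
      exact blockIdx_reverse_add_blockIdx (by rw [Fin.val_rev]; omega)
    refine .inr <| eq_of_ker (by simpa using hl) (by simpa using hls) fun i j => ?_
    have hi := hfσ i
    have hj := hfσ j
    omega

end BlockIdx

section BlockUpperTriangular

variable {K : Type*} [CommRing K] {n : ℕ}

variable (K n) in
/-- The block upper-triangular algebra over an arbitrary commutative ring `K`, as a subalgebra; for
`K = ℂ` its carrier is `blockAlg n k`. -/
def blockUpperTriangular (k : List ℕ) : Subalgebra K (Matrix (Fin n) (Fin n) K) :=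
  blockTriangularSubalgebra K K fun i : Fin n => blockIdx k i

theorem antitranspose_mem_blockUpperTriangular {l : List ℕ} (hls : l.sum = n)
    {X : Matrix (Fin n) (Fin n) K} (hX : X ∈ blockUpperTriangular K n l.reverse) :
    (X.submatrix Fin.revPerm Fin.revPerm)ᵀ ∈ blockUpperTriangular K n l := by
  intro i j hij
  have hrev (i : Fin n) : blockIdx l.reverse i.rev + blockIdx l i + 1 = l.length :=
    blockIdx_reverse_add_blockIdx (by rw [Fin.val_rev]; omega)
  refine hX (?_ : blockIdx l.reverse i.rev < blockIdx l.reverse j.rev)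
  have := hrev i
  have := hrev j
  dsimp only at hij
  omega

variable (K) in
/-- Reflection in the antidiagonal, as a linear equivalence between the block upper-triangular
algebras with opposite orders of blocks: transposition after reversal of all indices. -/
def antitranspose {l : List ℕ} (hls : l.sum = n) :
    blockUpperTriangular K n l.reverse ≃ₗ[K] blockUpperTriangular K n l where
  toFun X := ⟨_, antitranspose_mem_blockUpperTriangular hls X.2⟩
  invFun X := ⟨(X.val.submatrix Fin.revPerm Fin.revPerm)ᵀ,
    antitranspose_mem_blockUpperTriangular ((List.sum_reverse l).trans hls)
      (by rw [List.reverse_reverse]; exact X.2)⟩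
  map_add' _ _ := rfl
  map_smul' _ _ := rfl
  left_inv X := by ext; simp
  right_inv X := by ext; simp

theorem isJordanHom_antitranspose {l : List ℕ} (hls : l.sum = n) :
    IsJordanHom (antitranspose K hls) := fun X => by
  ext : 1
  simp [antitranspose, ← transpose_mul, submatrix_mul_equiv]

end BlockUpperTriangular

theorem exists_bijOn_iff_exists_linearEquiv {K R S : Type*} [Field K] [Ring R] [Ring S]
    [Algebra K R] [Algebra K S] (A : Subalgebra K R) (B : Subalgebra K S) :
    (∃ φ : R → S, Set.BijOn φ A B ∧ (∀ x ∈ A, ∀ y ∈ A, φ (x + y) = φ x + φ y) ∧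
      (∀ (c : K), ∀ x ∈ A, φ (c • x) = c • φ x) ∧ ∀ x ∈ A, φ (x * x) = φ x * φ x) ↔
    ∃ φ : A ≃ₗ[K] B, IsJordanHom φ := by
  constructor
  · rintro ⟨φ, hbij, hadd, hsmul, hsq⟩
    exact ⟨{ hbij.equiv with
      map_add' := fun x y => Subtype.ext (hadd x x.2 y y.2)
      map_smul' := fun c x => Subtype.ext (hsmul c x x.2) },
      fun x => Subtype.ext (hsq x x.2)⟩
  · rintro ⟨φ, hφ⟩
    obtain ⟨f, hf⟩ := LinearMap.exists_extend (p := A.toSubmodule)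
      (B.val.toLinearMap ∘ₗ φ.toLinearMap)
    have hfφ (x : A) : f x = φ x := LinearMap.congr_fun hf x
    refine ⟨f, ⟨fun x hx => ?_, fun x hx y hy hxy => ?_, fun y hy => ?_⟩,
      fun x _ y _ => map_add f x y, fun c x _ => map_smul f c x, fun x hx => ?_⟩
    · exact hfφ ⟨x, hx⟩ ▸ (φ _).2
    · rw [hfφ ⟨x, hx⟩, hfφ ⟨y, hy⟩] at hxy
      exact congrArg Subtype.val (φ.injective (Subtype.ext hxy))
    · exact ⟨φ.symm ⟨y, hy⟩, (φ.symm _).2, by rw [hfφ, φ.apply_symm_apply]⟩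
    · rw [hfφ ⟨x, hx⟩]
      exact (hfφ _).trans congr(($(hφ ⟨x, hx⟩)).val)

theorem blockAlg_jordan_iso_iff_general {K : Type*} [Field K] [NeZero (2 : K)] {n : ℕ}
    {k l : List ℕ} (hk : ∀ m ∈ k, 0 < m) (hl : ∀ m ∈ l, 0 < m)
    (hks : k.sum = n) (hls : l.sum = n) :
    List.TFAE [
      ∃ φ : blockUpperTriangular K n k ≃+ blockUpperTriangular K n l, IsJordanHom φ,
      ∃ φ : blockUpperTriangular K n k ≃ₗ[K] blockUpperTriangular K n l, IsJordanHom φ,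
      k = l ∨ k = l.reverse] := by
  tfae_have 1 → 3 := by
    rintro ⟨φ, hφ⟩
    obtain ⟨σ, hσ⟩ := hφ.exists_perm_mem_uIcc_iff
    exact eq_or_eq_reverse_of_mem_uIcc_iff hk hl hks hls hσ
  tfae_have 3 → 2
  | .inl h => h ▸ ⟨LinearEquiv.refl K _, fun _ => rfl⟩
  | .inr h => h ▸ ⟨antitranspose K hls, isJordanHom_antitranspose hls⟩
  tfae_have 2 → 1 := fun ⟨φ, hφ⟩ => ⟨φ.toAddEquiv, hφ⟩
  tfae_finish

theorem blockAlg_jordan_iso_iff {n : ℕ} (k l : List ℕ)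
    (hk : ∀ m ∈ k, 0 < m) (hl : ∀ m ∈ l, 0 < m)
    (hks : k.sum = n) (hls : l.sum = n) :
    (∃ φ : Matrix (Fin n) (Fin n) ℂ → Matrix (Fin n) (Fin n) ℂ,
      Set.BijOn φ (blockAlg n k) (blockAlg n l) ∧
      (∀ X ∈ blockAlg n k, ∀ Y ∈ blockAlg n k, φ (X + Y) = φ X + φ Y) ∧
      (∀ (c : ℂ), ∀ X ∈ blockAlg n k, φ (c • X) = c • φ X) ∧
      (∀ X ∈ blockAlg n k, φ (X * X) = φ X * φ X)) ↔
    (k = l ∨ k = l.reverse) :=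
  (exists_bijOn_iff_exists_linearEquiv (blockUpperTriangular ℂ n k)
    (blockUpperTriangular ℂ n l)).trans
    ((blockAlg_jordan_iso_iff_general hk hl hks hls).out 1 2)
end
end

section
/- Let A ⊆ M_n(ℂ) be a block upper-triangular subalgebra and let φ : A → M_n(ℂ) be a continuous map which preserves commutativity and spectrum and which fixes every diagonal matrix (φ(D) = D for all diagonal D). Then φ is homogeneous: φ(αA) = αφ(A) for every α ∈ ℂ and every A ∈ A. -/
open Matrix

noncomputable section

/-!
Suppose first that `A` has distinct eigenvalues. For `a ≠ 0` the matrices `a⁻¹ • φ (a • A)` commute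
with `φ A` and have the spectrum of `A`. Since `φ A` also has distinct eigenvalues, its commutant is
diagonal in an eigenbasis, so only finitely many matrices have these two properties. The curve
`a ↦ a⁻¹ • φ (a • A)` is continuous on the connected set `ℂ \ {0}`, hence constant, which gives
`φ (a • A) = a • φ A`; the case `a = 0` is the limit `a → 0`.

The matrices with distinct eigenvalues are dense in any linear subspace that contains one of them:
on the line from `A` to such a matrix, the resultant of the characteristic polynomial and its
derivative is a nonzero polynomial in the parameter. Continuity of `φ` then gives the general case.
-/

open Polynomial Set
open scoped Pointwise

section MatrixField

variable {K n : Type*} [Field K] [Fintype n] [DecidableEq n]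

-- The degrees are formal, since `derivative f` may lose degree in positive characteristic; fixing
-- them also makes the resultant commute with specialization.
lemma separable_iff_resultant_derivative_ne_zero {f : K[X]} (hf : f.Monic) :
    f.Separable ↔ resultant f (derivative f) f.natDegree (f.natDegree - 1) ≠ 0 := by
  obtain ⟨k, hk⟩ := Nat.exists_eq_add_of_le (natDegree_derivative_le f)
  rw [hk, resultant_add_right_deg f _ _ _ k le_rfl, hf.coeff_natDegree, one_pow, one_mul,
    ← isUnit_iff_ne_zero, isUnit_resultant_iff_isCoprime hf, Polynomial.Separable]

lemma separable_charpoly_iff_ncard_spectrum [IsAlgClosed K] {M : Matrix n n K} :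
    M.charpoly.Separable ↔ (spectrum K M).ncard = Fintype.card n := by
  have hspectrum : spectrum K M = M.charpoly.rootSet K := by
    ext x
    rw [mem_spectrum_iff_isRoot_charpoly, mem_rootSet_of_ne M.charpoly_monic.ne_zero,
      coe_aeval_eq_eval, IsRoot.def]
  rw [← card_rootSet_eq_natDegree_iff_of_splits (K := K) M.charpoly_monic.ne_zero
    (IsAlgClosed.splits _), hspectrum, charpoly_natDegree_eq_dim, ← Nat.card_coe_set_eq,
    Nat.card_eq_fintype_card]

lemma separable_charpoly_diagonal {d : n → K} (hd : Function.Injective d) :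
    (diagonal d).charpoly.Separable := by
  rw [charpoly_diagonal]
  exact separable_prod_X_sub_C_iff.mpr hd

lemma finite_setOfPred_not_separable_charpoly_eval {N : Matrix n n K[X]} {a : K}
    (ha : (N.map (eval a)).charpoly.Separable) :
    {t : K | ¬ (N.map (eval t)).charpoly.Separable}.Finite := by
  let m := Fintype.card n
  let p : K[X] := resultant N.charpoly (derivative N.charpoly) m (m - 1)
  have hp (t : K) : (N.map (eval t)).charpoly.Separable ↔ p.eval t ≠ 0 := by
    have hmap : (N.map (eval t)).charpoly = N.charpoly.map (evalRingHom t) :=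
      charpoly_map N (evalRingHom t)
    rw [separable_iff_resultant_derivative_ne_zero (charpoly_monic _), charpoly_natDegree_eq_dim,
      hmap, derivative_map, resultant_map_map, coe_evalRingHom]
  have hp0 : p ≠ 0 := by
    intro hzero
    simpa [hzero] using (hp a).mp ha
  simpa only [hp, not_not, IsRoot.def] using finite_setOfPred_isRoot hp0

lemma finite_setOfPred_not_separable_charpoly_lineMap (A : Matrix n n K) {D : Matrix n n K}
    (hD : D.charpoly.Separable) :
    {t : K | ¬ (AffineMap.lineMap A D t).charpoly.Separable}.Finite := by
  let N : Matrix n n K[X] := A.map C + (X : K[X]) • (D - A).map C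
  have hN (t : K) : AffineMap.lineMap A D t = N.map (eval t) := by
    ext i j
    simp [N, AffineMap.lineMap_apply, add_comm]
  simp only [hN]
  apply finite_setOfPred_not_separable_charpoly_eval (a := 1)
  rwa [← hN, AffineMap.lineMap_apply_one]

lemma exists_algEquiv_apply_eq_diagonal {M : Matrix n n K}
    (hM : (spectrum K M).ncard = Fintype.card n) :
    ∃ (e : Matrix n n K ≃ₐ[K] Matrix n n K) (d : n → K), Function.Injective d ∧
      e M = diagonal d := by
  have := M.finite_spectrum.to_subtype
  obtain ⟨eigenvalue⟩ : Nonempty (n ≃ spectrum K M) := Finite.card_eq.mp <| by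
    rw [Nat.card_coe_set_eq, hM, Nat.card_eq_fintype_card]
  let d (i : n) : K := eigenvalue i
  have hd : Function.Injective d := Subtype.val_injective.comp eigenvalue.injective
  have heigenvector (i : n) : ∃ v, Module.End.HasEigenvector (toLin' M) (d i) v := by
    apply Module.End.HasEigenvalue.exists_hasEigenvector
    rw [Module.End.hasEigenvalue_iff_mem_spectrum, spectrum_toLin']
    exact (eigenvalue i).2
  choose v hv using heigenvector
  have hli : LinearIndependent K v := Module.End.eigenvectors_linearIndependent' _ d hd v hv
  let b : Module.Basis n K (n → K) :=
    .mk hli (hli.span_eq_top_of_card_eq_finrank' (by simp)).ge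
  refine ⟨toLinAlgEquiv'.trans (LinearMap.toMatrixAlgEquiv b), d, hd, ?_⟩
  ext i j
  have hb : toLinAlgEquiv' M (b j) = d j • b j := by
    simpa [b] using (hv j).apply_eq_smul
  rw [AlgEquiv.trans_apply, LinearMap.toMatrixAlgEquiv_apply, hb, map_smul, b.repr_self,
    diagonal_apply]
  by_cases hij : i = j <;> simp [hij]

lemma isDiag_of_commute_diagonal {R : Type*} [CommRing R] [IsDomain R] {d : n → R}
    (hd : Function.Injective d) {N : Matrix n n R} (hN : Commute N (diagonal d)) : N.IsDiag := by
  intro i j hij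
  have hentry : N i j * d j = N i j * d i := by
    simpa [mul_comm] using congrFun (congrFun hN.eq i) j
  exact (mul_eq_mul_left_iff.mp hentry).resolve_left fun h ↦ hij (hd h).symm

lemma finite_setOfPred_commute_diagonal_spectrum_subset {d : n → K} (hd : Function.Injective d)
    {S : Set K} (hS : S.Finite) :
    {N : Matrix n n K | Commute N (diagonal d) ∧ spectrum K N ⊆ S}.Finite := by
  apply ((Finite.pi' fun _ : n ↦ hS).image diagonal).subset
  rintro N ⟨hcomm, hspec⟩
  have hN : diagonal N.diag = N := (isDiag_of_commute_diagonal hd hcomm).diagonal_diag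
  rw [← hN, spectrum_diagonal] at hspec
  exact ⟨N.diag, fun i ↦ hspec (mem_range_self i), hN⟩

lemma finite_setOfPred_commute_spectrum_subset {M : Matrix n n K}
    (hM : (spectrum K M).ncard = Fintype.card n) {S : Set K} (hS : S.Finite) :
    {N : Matrix n n K | Commute N M ∧ spectrum K N ⊆ S}.Finite := by
  obtain ⟨e, d, hd, he⟩ := exists_algEquiv_apply_eq_diagonal hM
  refine ((finite_setOfPred_commute_diagonal_spectrum_subset hd hS).preimage
    e.injective.injOn).subset ?_
  rintro N ⟨hcomm, hspec⟩
  exact ⟨he ▸ hcomm.map e, (AlgEquiv.spectrum_eq e N).trans_subset hspec⟩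

end MatrixField

lemma eq_smul_of_spectrum_eq_smul {n : Type*} [Fintype n] [DecidableEq n]
    {F : ℂ → Matrix n n ℂ} (hF : Continuous F)
    (hcard : (spectrum ℂ (F 1)).ncard = Fintype.card n) (hcomm : ∀ a, Commute (F a) (F 1))
    (hspec : ∀ a : ℂˣ, spectrum ℂ (F a) = a • spectrum ℂ (F 1)) (a : ℂ) : F a = a • F 1 := by
  have hcont : ContinuousOn (fun b : ℂ ↦ b⁻¹ • F b) {0}ᶜ :=
    continuousOn_inv₀.smul hF.continuousOn
  have hmaps : MapsTo (fun b : ℂ ↦ b⁻¹ • F b) {0}ᶜ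
      {N | Commute N (F 1) ∧ spectrum ℂ N ⊆ spectrum ℂ (F 1)} := by
    intro b hb
    lift b to ℂˣ using isUnit_iff_ne_zero.mpr hb
    have hspec_inv : spectrum ℂ (b⁻¹ • F b) = spectrum ℂ (F 1) := by
      rw [spectrum.unit_smul_eq_smul, hspec, inv_smul_smul]
    refine ⟨(hcomm b).smul_left _, ?_⟩
    simpa only [Units.smul_def, Units.val_inv_eq_inv_val] using hspec_inv.subset
  have hfinite := finite_setOfPred_commute_spectrum_subset hcard (F 1).finite_spectrum
  have hpre : IsPreconnected ({0}ᶜ : Set ℂ) :=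
    (isConnected_compl_singleton_of_one_lt_rank (by simp) 0).isPreconnected
  have hne : EqOn F (fun b ↦ b • F 1) {0}ᶜ := by
    intro b hb
    have hconst : b⁻¹ • F b = (1 : ℂ)⁻¹ • F 1 :=
      hpre.constant_of_mapsTo hfinite.isDiscrete hcont hmaps hb one_ne_zero
    rwa [inv_one, one_smul, inv_smul_eq_iff₀ hb] at hconst
  exact congrFun (hF.ext_on (dense_compl_singleton 0) (by fun_prop) hne) a

lemma subset_closure_separable_charpoly {𝕜 n : Type*} [NontriviallyNormedField 𝕜] [Fintype n]
    [DecidableEq n] {V : Submodule 𝕜 (Matrix n n 𝕜)} {D : Matrix n n 𝕜} (hDV : D ∈ V)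
    (hD : D.charpoly.Separable) :
    (V : Set (Matrix n n 𝕜)) ⊆ closure {A | A ∈ V ∧ A.charpoly.Separable} := by
  intro A hA
  have hdense : Dense {t : 𝕜 | (AffineMap.lineMap A D t).charpoly.Separable} := by
    simpa only [← compl_eq_univ_sdiff, compl_ofPred, not_not] using
      dense_univ.sdiff_finite (finite_setOfPred_not_separable_charpoly_lineMap A hD)
  have hline : Continuous fun t : 𝕜 ↦ AffineMap.lineMap A D t := by
    simp only [AffineMap.lineMap_apply_module]
    fun_prop
  rw [← AffineMap.lineMap_apply_zero (k := 𝕜) A D]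
  refine map_mem_closure hline (hdense 0) fun t ht ↦ ⟨?_, ht⟩
  rw [AffineMap.lineMap_apply_module]
  exact V.add_mem (V.smul_mem _ hA) (V.smul_mem _ hDV)

theorem homogeneity_general {n : Type*} [Fintype n] [DecidableEq n]
    {V : Submodule ℂ (Matrix n n ℂ)} (hV : ∃ D ∈ V, D.charpoly.Separable)
    {φ : Matrix n n ℂ → Matrix n n ℂ} (hcont : ContinuousOn φ V)
    (hcomm : ∀ A ∈ V, ∀ α : ℂ, Commute (φ (α • A)) (φ A))
    (hspec : ∀ A ∈ V, spectrum ℂ (φ A) = spectrum ℂ A) (α : ℂ)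
    {A : Matrix n n ℂ} (hA : A ∈ V) : φ (α • A) = α • φ A := by
  obtain ⟨D, hDV, hD⟩ := hV
  suffices EqOn (fun A ↦ φ (α • A)) (fun A ↦ α • φ A) V from this hA
  refine EqOn.of_subset_closure ?_ (hcont.comp (by fun_prop) fun A hA ↦ V.smul_mem α hA)
    (hcont.const_smul α) (fun A hA ↦ hA.1) (subset_closure_separable_charpoly hDV hD)
  rintro A ⟨hA, hsep⟩
  have hline : Continuous fun a : ℂ ↦ φ (a • A) :=
    hcont.comp_continuous (by fun_prop) fun a ↦ V.smul_mem a hA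
  have h := eq_smul_of_spectrum_eq_smul hline ?_ ?_ ?_ α
  · simpa only [one_smul] using h
  · rwa [one_smul, hspec A hA, ← separable_charpoly_iff_ncard_spectrum]
  · simpa only [one_smul] using hcomm A hA
  · intro a
    rw [one_smul, hspec _ (V.smul_mem (a : ℂ) hA), hspec A hA]
    exact spectrum.unit_smul_eq_smul A a

/-- The block upper-triangular algebra `blockAlg n k`, bundled as a linear subspace of the
matrices, the kind of domain treated in `homogeneity_general`. -/
def blockSubmodule (n : ℕ) (k : List ℕ) : Submodule ℂ (Matrix (Fin n) (Fin n) ℂ) where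
  carrier := blockAlg n k
  zero_mem' _ _ _ := rfl
  add_mem' hX hY i j hij := by simp [hX i j hij, hY i j hij]
  smul_mem' c X hX i j hij := by simp [hX i j hij]

lemma exists_mem_blockSubmodule_separable_charpoly (n : ℕ) (k : List ℕ) :
    ∃ D ∈ blockSubmodule n k, D.charpoly.Separable := by
  let d (i : Fin n) : ℂ := (i : ℕ)
  have hd : Function.Injective d := Nat.cast_injective.comp Fin.val_injective
  refine ⟨diagonal d, fun i j hij ↦ diagonal_apply_ne d ?_, separable_charpoly_diagonal hd⟩
  rintro rfl
  exact hij.false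

theorem homogeneity {n : ℕ} (𝒜 : Set (Matrix (Fin n) (Fin n) ℂ))
    (h𝒜 : IsBlockUT n 𝒜)
    (φ : Matrix (Fin n) (Fin n) ℂ → Matrix (Fin n) (Fin n) ℂ)
    (hcont : ContinuousOn φ 𝒜)
    (hcomm : ∀ X ∈ 𝒜, ∀ Y ∈ 𝒜, X * Y = Y * X → φ X * φ Y = φ Y * φ X)
    (hspec : ∀ X ∈ 𝒜, spectrum ℂ (φ X) = spectrum ℂ X)
    (hfix : ∀ d : Fin n → ℂ, φ (Matrix.diagonal d) = Matrix.diagonal d) :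
    ∀ (α : ℂ), ∀ A ∈ 𝒜, φ (α • A) = α • φ A := by
  obtain ⟨k, -, -, rfl⟩ := h𝒜
  exact fun α A hA ↦ homogeneity_general (exists_mem_blockSubmodule_separable_charpoly n k) hcont
    (fun B hB a ↦ hcomm _ ((blockSubmodule n k).smul_mem a hB) B hB
      ((Commute.refl B).smul_left a)) hspec α hA
end
end
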